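/- arXiv:math/0610642 — 3 statements merged into one kernel-verified Lean document; each statement's English description precedes it below -/
import Mathlib

section
/- Let k, ω, V, k₀ be real numbers with ω = k² + V, and let ψ(x,t) = exp(i(kx − ωt)). Then at every point (x,t) ∈ ℝ², −∂ₓ∂ₜψ + i(3k₀² − V)∂ₓψ + (k₀³ − 3k₀V)ψ + 3ik₀∂ₜψ = −(k − k₀)³·ψ(x,t). In particular, the plane wave satisfies Kuska's absorbing boundary condition ABC(1,1) identically if and only if k = k₀. -/
/-- The 1D plane wave `ψ(x,t) = exp(i(kx − ωt))`. -/
noncomputable def planeWave1D (k ω : ℝ) (x t : ℝ) : ℂ :=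
  Complex.exp (Complex.I * ((k * x - ω * t : ℝ) : ℂ))

theorem hasDerivAt_planeWave1D_space (k ω x t : ℝ) :
    HasDerivAt (fun x' : ℝ => planeWave1D k ω x' t)
      (Complex.I * (k : ℂ) * planeWave1D k ω x t) x := by
  have h : HasDerivAt (fun x' : ℝ => k * x' - ω * t) k x := by
    simpa using ((hasDerivAt_id x).const_mul k).sub_const (ω * t)
  refine (h.ofReal_comp.const_mul Complex.I).cexp.congr_deriv ?_
  rw [planeWave1D, mul_comm]

theorem hasDerivAt_planeWave1D_time (k ω x t : ℝ) :
    HasDerivAt (fun t' : ℝ => planeWave1D k ω x t')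
      (-(Complex.I * (ω : ℂ)) * planeWave1D k ω x t) t := by
  have h : HasDerivAt (fun t' : ℝ => k * x - ω * t') (-ω) t := by
    simpa using ((hasDerivAt_id t).const_mul ω).const_sub (k * x)
  refine (h.ofReal_comp.const_mul Complex.I).cexp.congr_deriv ?_
  rw [planeWave1D]
  push_cast
  ring

theorem deriv_deriv_planeWave1D (k ω x t : ℝ) :
    deriv (fun x' : ℝ => deriv (fun t' : ℝ => planeWave1D k ω x' t') t) x
      = (k : ℂ) * ω * planeWave1D k ω x t := by
  simp only [(hasDerivAt_planeWave1D_time k ω _ t).deriv]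
  rw [((hasDerivAt_planeWave1D_space k ω x t).const_mul _).deriv]
  linear_combination (-(k : ℂ) * ω * planeWave1D k ω x t) * Complex.I_sq

/-- for the plane wave with `ω = k² + V`, the left-hand side of Kuska's
ABC(1,1) equals `−(k − k₀)³·ψ`; in particular the plane wave satisfies ABC(1,1)
identically iff `k = k₀`. -/
theorem kuska_abc_plane_wave (k ω V k₀ : ℝ) (hω : ω = k ^ 2 + V) :
    (∀ x t : ℝ,
      -(deriv (fun x' : ℝ => deriv (fun t' : ℝ => planeWave1D k ω x' t') t) x)
        + Complex.I * ((3 * k₀ ^ 2 - V : ℝ) : ℂ) * deriv (fun x' : ℝ => planeWave1D k ω x' t) x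
        + ((k₀ ^ 3 - 3 * k₀ * V : ℝ) : ℂ) * planeWave1D k ω x t
        + 3 * Complex.I * (k₀ : ℂ) * deriv (fun t' : ℝ => planeWave1D k ω x t') t
      = -(((k - k₀ : ℝ) : ℂ)) ^ 3 * planeWave1D k ω x t) ∧
    ((∀ x t : ℝ,
      -(deriv (fun x' : ℝ => deriv (fun t' : ℝ => planeWave1D k ω x' t') t) x)
        + Complex.I * ((3 * k₀ ^ 2 - V : ℝ) : ℂ) * deriv (fun x' : ℝ => planeWave1D k ω x' t) x
        + ((k₀ ^ 3 - 3 * k₀ * V : ℝ) : ℂ) * planeWave1D k ω x t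
        + 3 * Complex.I * (k₀ : ℂ) * deriv (fun t' : ℝ => planeWave1D k ω x t') t
      = 0) ↔ k = k₀) := by
  have key : ∀ x t : ℝ,
      -(deriv (fun x' : ℝ => deriv (fun t' : ℝ => planeWave1D k ω x' t') t) x)
        + Complex.I * ((3 * k₀ ^ 2 - V : ℝ) : ℂ) * deriv (fun x' : ℝ => planeWave1D k ω x' t) x
        + ((k₀ ^ 3 - 3 * k₀ * V : ℝ) : ℂ) * planeWave1D k ω x t
        + 3 * Complex.I * (k₀ : ℂ) * deriv (fun t' : ℝ => planeWave1D k ω x t') t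
      = -(((k - k₀ : ℝ) : ℂ)) ^ 3 * planeWave1D k ω x t := by
    intro x t
    rw [deriv_deriv_planeWave1D, (hasDerivAt_planeWave1D_space k ω x t).deriv,
      (hasDerivAt_planeWave1D_time k ω x t).deriv, hω]
    push_cast
    linear_combination ((3 * (k₀ : ℂ) ^ 2 - V) * k - 3 * k₀ * ((k : ℂ) ^ 2 + V))
      * planeWave1D k (k ^ 2 + V) x t * Complex.I_sq
  refine ⟨key, fun h => ?_, fun h x t => ?_⟩
  · have h₀ := (key 0 0).symm.trans (h 0 0)
    have hk : ((k - k₀ : ℝ) : ℂ) = 0 := by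
      simpa [planeWave1D] using h₀
    exact sub_eq_zero.mp (Complex.ofReal_eq_zero.mp hk)
  · rw [key, h]
    simp
end

section
/- Let V, k₀ be real constants and let ψ: ℝ² → ℂ be three times continuously differentiable, satisfying i∂ₜψ = −∂ₓₓψ + Vψ on an open neighborhood of a point (x₀,t₀). Then at (x₀,t₀), −∂ₓ∂ₜψ + i(3k₀² − V)∂ₓψ + (k₀³ − 3k₀V)ψ + 3ik₀∂ₜψ = −i∂ₓₓₓψ − 3k₀∂ₓₓψ + 3ik₀²∂ₓψ + k₀³ψ; that is, Kuska's ABC(1,1) combined with the equation is equivalent to (i∂ₓ + k₀)³ψ = 0, the Fevens–Jiang condition with p = 3 and group velocities C₁ = C₂ = C₃ = 2k₀. -/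
/-- if a C³ function `ψ` satisfies `i∂ₜψ = −∂ₓₓψ + Vψ` on a neighborhood of
`(x₀,t₀)`, then at that point the left-hand side of Kuska's ABC(1,1) equals
`−i∂ₓₓₓψ − 3k₀∂ₓₓψ + 3ik₀²∂ₓψ + k₀³ψ`, i.e. Kuska's condition combined with the equation
is the Fevens–Jiang condition `(i∂ₓ + k₀)³ψ = 0` with `C₁ = C₂ = C₃ = 2k₀`. -/
theorem kuska_equals_fevens_jiang (V k₀ : ℝ) (ψ : ℝ → ℝ → ℂ)
    (hψ : ContDiff ℝ 3 (fun p : ℝ × ℝ => ψ p.1 p.2)) (x₀ t₀ : ℝ)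
    (heq : ∀ᶠ p : ℝ × ℝ in nhds (x₀, t₀),
      Complex.I * deriv (fun t : ℝ => ψ p.1 t) p.2
        = -(deriv (fun x : ℝ => deriv (fun x' : ℝ => ψ x' p.2) x) p.1) + (V : ℂ) * ψ p.1 p.2) :
    -(deriv (fun x : ℝ => deriv (fun t : ℝ => ψ x t) t₀) x₀)
      + Complex.I * ((3 * k₀ ^ 2 - V : ℝ) : ℂ) * deriv (fun x : ℝ => ψ x t₀) x₀
      + ((k₀ ^ 3 - 3 * k₀ * V : ℝ) : ℂ) * ψ x₀ t₀
      + 3 * Complex.I * (k₀ : ℂ) * deriv (fun t : ℝ => ψ x₀ t) t₀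
    = -Complex.I *
        deriv (fun x : ℝ =>
          deriv (fun x' : ℝ => deriv (fun x'' : ℝ => ψ x'' t₀) x') x) x₀
      - 3 * (k₀ : ℂ) * deriv (fun x : ℝ => deriv (fun x' : ℝ => ψ x' t₀) x) x₀
      + 3 * Complex.I * ((k₀ ^ 2 : ℝ) : ℂ) * deriv (fun x : ℝ => ψ x t₀) x₀
      + ((k₀ ^ 3 : ℝ) : ℂ) * ψ x₀ t₀ := by
  have hf : ContDiff ℝ 3 (fun x : ℝ => ψ x t₀) :=
    hψ.comp (contDiff_id.prodMk contDiff_const)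
  have hf₀ : DifferentiableAt ℝ (fun x : ℝ => ψ x t₀) x₀ :=
    hf.differentiable (by norm_num) x₀
  have hf₂ : DifferentiableAt ℝ
      (fun x : ℝ => deriv (fun x' : ℝ => deriv (fun x'' : ℝ => ψ x'' t₀) x') x) x₀ := by
    have h₁ : ContDiff ℝ 2 (deriv fun x : ℝ => ψ x t₀) :=
      ((contDiff_succ_iff_deriv (n := 2)).1 (by norm_num; exact hf)).2.2
    have h₂ : ContDiff ℝ 1 (deriv (deriv fun x : ℝ => ψ x t₀)) :=
      ((contDiff_succ_iff_deriv (n := 1)).1 (by norm_num; exact h₁)).2.2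
    exact h₂.differentiable (by norm_num) x₀
  have hline : ∀ᶠ x : ℝ in nhds x₀,
      Complex.I * deriv (fun t : ℝ => ψ x t) t₀
        = -(deriv (fun x' : ℝ => deriv (fun x'' : ℝ => ψ x'' t₀) x') x) + (V : ℂ) * ψ x t₀ :=
    (Continuous.prodMk_left t₀).continuousAt.eventually heq
  have htime : (fun x : ℝ => deriv (fun t : ℝ => ψ x t) t₀) =ᶠ[nhds x₀] fun x =>
      Complex.I * deriv (fun x' : ℝ => deriv (fun x'' : ℝ => ψ x'' t₀) x') x
        + -Complex.I * V * ψ x t₀ := by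
    filter_upwards [hline] with x hx
    linear_combination (-Complex.I) * hx + deriv (fun t : ℝ => ψ x t) t₀ * Complex.I_sq
  have hmixed := htime.deriv_eq
  rw [deriv_fun_add (hf₂.const_mul _) (hf₀.const_mul _), deriv_const_mul _ hf₂,
    deriv_const_mul _ hf₀] at hmixed
  push_cast
  linear_combination -hmixed + 3 * (k₀ : ℂ) * hline.self_of_nhds
end

section
/- Let ξ, η, ξ₀, V be real numbers, set ω = ξ² + η² + V, and let ψ(x,y,t) = exp(i(ξx + ηy − ωt)). Then at every point (x,y,t) ∈ ℝ³, i∂ₓ∂ᵧᵧψ − ∂ₓ∂ₜψ + i(3ξ₀² − V)∂ₓψ + (ξ₀³ − 3ξ₀V)ψ + 3ξ₀∂ᵧᵧψ + 3iξ₀∂ₜψ = −(ξ − ξ₀)³·ψ(x,y,t). In particular, the east absorbing boundary condition annihilates exactly those plane waves with x-wave number ξ = ξ₀, for every transverse wave number η. -/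
/-- The 2D plane wave `ψ(x,y,t) = exp(i(ξx + ηy − ωt))`. -/
noncomputable def planeWave2D (ξ η ω : ℝ) (x y t : ℝ) : ℂ :=
  Complex.exp (Complex.I * ((ξ * x + η * y - ω * t : ℝ) : ℂ))

theorem hasDerivAt_planeWave2D_x (ξ η ω x y t : ℝ) :
    HasDerivAt (fun x' : ℝ => planeWave2D ξ η ω x' y t)
      (Complex.I * ξ * planeWave2D ξ η ω x y t) x := by
  have h : HasDerivAt (fun x' : ℝ => ξ * x' + η * y - ω * t) ξ x := by
    simpa using (((hasDerivAt_id x).const_mul ξ).add_const (η * y)).sub_const (ω * t)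
  exact (h.ofReal_comp.const_mul Complex.I).cexp.congr_deriv (mul_comm _ _)

theorem hasDerivAt_planeWave2D_y (ξ η ω x y t : ℝ) :
    HasDerivAt (fun y' : ℝ => planeWave2D ξ η ω x y' t)
      (Complex.I * η * planeWave2D ξ η ω x y t) y := by
  have h : HasDerivAt (fun y' : ℝ => ξ * x + η * y' - ω * t) η y := by
    simpa using (((hasDerivAt_id y).const_mul η).const_add (ξ * x)).sub_const (ω * t)
  exact (h.ofReal_comp.const_mul Complex.I).cexp.congr_deriv (mul_comm _ _)

theorem hasDerivAt_planeWave2D_t (ξ η ω x y t : ℝ) :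
    HasDerivAt (fun t' : ℝ => planeWave2D ξ η ω x y t')
      (-(Complex.I * ω) * planeWave2D ξ η ω x y t) t := by
  have h : HasDerivAt (fun t' : ℝ => ξ * x + η * y - ω * t') (-ω) t := by
    simpa using ((hasDerivAt_id t).const_mul ω).const_sub (ξ * x + η * y)
  refine (h.ofReal_comp.const_mul Complex.I).cexp.congr_deriv ?_
  rw [Complex.ofReal_neg, mul_neg, mul_comm]
  rfl

theorem planeWave2D_ne_zero (ξ η ω x y t : ℝ) : planeWave2D ξ η ω x y t ≠ 0 :=
  Complex.exp_ne_zero _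

/-- for the 2D plane wave with `ω = ξ² + η² + V`, the left-hand side of the
east absorbing boundary condition ABC(1,1) equals `−(ξ − ξ₀)³·ψ`; in particular it
annihilates exactly the plane waves with `ξ = ξ₀`, for every transverse wave number `η`. -/
theorem east_abc_plane_wave (ξ η ξ₀ V : ℝ) (ω : ℝ) (hω : ω = ξ ^ 2 + η ^ 2 + V) :
    (∀ x y t : ℝ,
      Complex.I *
          deriv (fun x' : ℝ =>
            deriv (fun y' : ℝ => deriv (fun y'' : ℝ => planeWave2D ξ η ω x' y'' t) y') y) x
        - deriv (fun x' : ℝ => deriv (fun t' : ℝ => planeWave2D ξ η ω x' y t') t) x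
        + Complex.I * ((3 * ξ₀ ^ 2 - V : ℝ) : ℂ) *
            deriv (fun x' : ℝ => planeWave2D ξ η ω x' y t) x
        + ((ξ₀ ^ 3 - 3 * ξ₀ * V : ℝ) : ℂ) * planeWave2D ξ η ω x y t
        + 3 * (ξ₀ : ℂ) *
            deriv (fun y' : ℝ => deriv (fun y'' : ℝ => planeWave2D ξ η ω x y'' t) y') y
        + 3 * Complex.I * (ξ₀ : ℂ) * deriv (fun t' : ℝ => planeWave2D ξ η ω x y t') t
      = -(((ξ - ξ₀ : ℝ) : ℂ)) ^ 3 * planeWave2D ξ η ω x y t) ∧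
    ((∀ x y t : ℝ,
      Complex.I *
          deriv (fun x' : ℝ =>
            deriv (fun y' : ℝ => deriv (fun y'' : ℝ => planeWave2D ξ η ω x' y'' t) y') y) x
        - deriv (fun x' : ℝ => deriv (fun t' : ℝ => planeWave2D ξ η ω x' y t') t) x
        + Complex.I * ((3 * ξ₀ ^ 2 - V : ℝ) : ℂ) *
            deriv (fun x' : ℝ => planeWave2D ξ η ω x' y t) x
        + ((ξ₀ ^ 3 - 3 * ξ₀ * V : ℝ) : ℂ) * planeWave2D ξ η ω x y t
        + 3 * (ξ₀ : ℂ) *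
            deriv (fun y' : ℝ => deriv (fun y'' : ℝ => planeWave2D ξ η ω x y'' t) y') y
        + 3 * Complex.I * (ξ₀ : ℂ) * deriv (fun t' : ℝ => planeWave2D ξ η ω x y t') t
      = 0) ↔ ξ = ξ₀) := by
  rw [and_iff_left_of_imp]
  · intro x y t
    simp only [(hasDerivAt_planeWave2D_x _ _ _ _ _ _).deriv,
      (hasDerivAt_planeWave2D_y _ _ _ _ _ _).deriv,
      (hasDerivAt_planeWave2D_t _ _ _ _ _ _).deriv, deriv_const_mul_field]
    subst hω
    push_cast
    generalize planeWave2D _ _ _ _ _ _ = ψ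
    have hI : Complex.I ^ 2 = -1 := Complex.I_sq
    have hI4 : Complex.I ^ 4 = 1 := Complex.I_pow_four
    ring_nf
    simp only [hI, hI4]
    ring
  · intro h
    simp only [h]
    constructor
    · intro h0
      have h1 := (mul_eq_zero.mp (h0 0 0 0)).resolve_right (planeWave2D_ne_zero _ _ _ _ _ _)
      rw [neg_eq_zero, pow_eq_zero_iff three_ne_zero, Complex.ofReal_eq_zero] at h1
      exact sub_eq_zero.mp h1
    · rintro rfl x y t
      simp
end
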